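/- arXiv:2605.03828 — 2 statements merged into one kernel-verified Lean document; each statement's English description precedes it below -/
import Mathlib

section
/- For every infinite cardinal κ there exists a coloring c : [κ⁺]² → κ⁺ such that: (i) for all ξ < β < κ⁺, the set t_{ξβ} := {ζ < β : c({ζ, β}) = c({ξ, β})} has order type strictly less than κ^ω (ordinal exponentiation, where κ is identified with its initial ordinal); and (ii) there is no c-rainbow subset of κ⁺ of order type ω₁ + 1. In other words, κ⁺ ↛* (ω₁+1)²_{<κ^ω-type-bounded}. -/
/-!
The colouring comes from the Milner–Rado paradox: every ordinal `β < κ⁺` is a union of countably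
many sets, the `n`-th one of order type at most `κ ^ (n + 1)` (`milner_rado`). Letting `c ζ β` be
the index of the piece of `β` that contains `ζ`, each `t_{ξβ}` is a piece of `β`, so its type is
below `κ ^ ω`. As `c` has only countably many values, no set with a top element and uncountably
many elements below it is rainbow, and a set of type `ω₁ + 1` is of this kind.

The Milner–Rado decomposition is built by strong induction on `β`: an injection `r` of `β` into `κ`
cuts `β` into at most `κ` consecutive intervals, each with a last element. These last elements form
the piece of index `0`; the piece of index `n + 1` collects the pieces of index `n` of the initial
segments below the last elements, each restricted to its own interval: a sum of at most `κ` sets of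
type at most `κ ^ (n + 1)`.
-/

open Cardinal Ordinal Set

/-- The order type of a set of ordinals (as an ordinal in the next universe). -/
noncomputable def otp (S : Set Ordinal.{0}) : Ordinal.{1} :=
  Ordinal.type ((· < ·) : S → S → Prop)

/-- `A` is `c`-rainbow: `c` restricted to pairs from `A` is injective. -/
def Rainbow (c : Ordinal.{0} → Ordinal.{0} → Ordinal.{0}) (A : Set Ordinal.{0}) : Prop :=
  ∀ a b a' b' : Ordinal.{0}, a ∈ A → b ∈ A → a' ∈ A → b' ∈ A → a < b → a' < b' →
    c a b = c a' b' → a = a' ∧ b = b'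

/-- Milner–Rado paradox: `f` gives the index of the piece containing a point, and the bound
`κ ^ (n + 1)` on the type of the `n`-th piece is expressed by a map `e` that is strictly increasing
on each piece. -/
theorem milner_rado (κ : Cardinal.{0}) (β : Ordinal.{0})
    (hβ : β < (Order.succ κ).ord) :
    ∃ (f : Ordinal.{0} → ℕ) (e : Ordinal.{0} → Ordinal.{0}),
      (∀ ζ < β, e ζ < κ.ord ^ (f ζ + 1)) ∧
      (∀ ζ ζ', ζ < ζ' → ζ' < β → f ζ = f ζ' → e ζ < e ζ') := by
  induction β using WellFoundedLT.induction with
  | ind β ih =>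
  obtain ⟨r, hrlt, hrinj⟩ : ∃ r : Ordinal.{0} → Ordinal.{0},
      (∀ ζ < β, r ζ < κ.ord) ∧ (∀ ζ < β, ∀ ζ' < β, r ζ = r ζ' → ζ = ζ') := by
    have h : #(Set.Iio β) ≤ #(Set.Iio κ.ord) := by
      rw [Cardinal.mk_Iio_ordinal, Cardinal.mk_Iio_ordinal, Cardinal.lift_le, Cardinal.card_ord]
      exact Order.lt_succ_iff.1 (Cardinal.lt_ord.1 hβ)
    obtain ⟨φ⟩ := h
    refine ⟨fun ζ => if h : ζ < β then φ ⟨ζ, h⟩ else 0, fun ζ h => ?_, fun ζ h ζ' h' he => ?_⟩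
    · simp only [h, dite_true]; exact (φ ⟨ζ, h⟩).2
    · simp only [h, h', dite_true] at he
      exact congrArg Subtype.val (φ.injective (Subtype.ext he))
  -- `G ζ` is the last element of the interval containing `ζ`: it minimizes `r` on `[ζ, β)`.
  have hG : ∀ ζ, ∃ γ, ζ < β → ζ ≤ γ ∧ γ < β ∧ ∀ δ, ζ ≤ δ → δ < β → r γ ≤ r δ := by
    intro ζ
    by_cases h : ζ < β
    · obtain ⟨γ, hγ, hmin⟩ := (InvImage.wf r (wellFounded_lt (α := Ordinal.{0}))).has_min
        (Set.Ico ζ β) ⟨ζ, le_rfl, h⟩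
      exact ⟨γ, fun _ => ⟨hγ.1, hγ.2, fun δ h1 h2 => not_lt.1 (hmin δ ⟨h1, h2⟩)⟩⟩
    · exact ⟨0, fun h' => absurd h' h⟩
  choose G hG using hG
  have hF : ∀ γ, ∃ (f : Ordinal.{0} → ℕ) (e : Ordinal.{0} → Ordinal.{0}), γ < β →
      (∀ ζ < γ, e ζ < κ.ord ^ (f ζ + 1)) ∧
      (∀ ζ ζ', ζ < ζ' → ζ' < γ → f ζ = f ζ' → e ζ < e ζ') := by
    intro γ
    by_cases h : γ < β
    · obtain ⟨f, e, hfe⟩ := ih γ h (h.trans hβ)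
      exact ⟨f, e, fun _ => hfe⟩
    · exact ⟨fun _ => 0, fun _ => 0, fun h' => absurd h' h⟩
  choose F E hFE using hF
  have hmono : ∀ ζ ζ', ζ < ζ' → ζ' < β → r (G ζ) ≤ r (G ζ') := fun ζ ζ' h h' =>
    (hG ζ (h.trans h')).2.2 _ (h.le.trans (hG ζ' h').1) (hG ζ' h').2.1
  refine ⟨fun ζ => if ζ = G ζ then 0 else F (G ζ) ζ + 1,
    fun ζ => if ζ = G ζ then r (G ζ) else
      κ.ord ^ (F (G ζ) ζ + 1) * r (G ζ) + E (G ζ) ζ, fun ζ hζ => ?_, fun ζ ζ' h h' hf => ?_⟩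
  · obtain ⟨h1, h2, -⟩ := hG ζ hζ
    dsimp only
    split_ifs with hc
    · simpa using hrlt _ h2
    · have hlt := (hFE _ h2).1 ζ (lt_of_le_of_ne h1 hc)
      calc κ.ord ^ (F (G ζ) ζ + 1) * r (G ζ) + E (G ζ) ζ
          < κ.ord ^ (F (G ζ) ζ + 1) * r (G ζ) + κ.ord ^ (F (G ζ) ζ + 1) := by gcongr
        _ = κ.ord ^ (F (G ζ) ζ + 1) * Order.succ (r (G ζ)) := (Ordinal.mul_succ _ _).symm
        _ ≤ κ.ord ^ (F (G ζ) ζ + 1) * κ.ord := by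
          gcongr; exact Order.succ_le_of_lt (hrlt _ h2)
        _ = κ.ord ^ (F (G ζ) ζ + 1 + 1) := (pow_succ _ _).symm
  · have hζ := h.trans h'
    obtain ⟨h1, h2, -⟩ := hG ζ hζ
    obtain ⟨h1', h2', -⟩ := hG ζ' h'
    have hm := hmono ζ ζ' h h'
    dsimp only at hf ⊢
    by_cases hc : ζ = G ζ <;> by_cases hc' : ζ' = G ζ'
    · rw [if_pos hc, if_pos hc']
      refine lt_of_le_of_ne hm fun he => h.ne ?_
      rw [hc, hc']
      exact hrinj _ h2 _ h2' he
    · simp [if_pos hc, if_neg hc'] at hf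
    · simp [if_neg hc, if_pos hc'] at hf
    · rw [if_neg hc, if_neg hc'] at hf ⊢
      have hf := Nat.succ_injective hf
      rcases hm.lt_or_eq with hm | hm
      · have hlt := (hFE _ h2).1 ζ (lt_of_le_of_ne h1 hc)
        calc κ.ord ^ (F (G ζ) ζ + 1) * r (G ζ) + E (G ζ) ζ
            < κ.ord ^ (F (G ζ) ζ + 1) * r (G ζ) + κ.ord ^ (F (G ζ) ζ + 1) := by gcongr
          _ = κ.ord ^ (F (G ζ) ζ + 1) * Order.succ (r (G ζ)) := (Ordinal.mul_succ _ _).symm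
          _ ≤ κ.ord ^ (F (G ζ) ζ + 1) * r (G ζ') := by
            gcongr; exact Order.succ_le_of_lt hm
          _ ≤ _ := by rw [hf]; exact le_self_add
      · have hg := hrinj _ h2 _ h2' hm
        have he := (hFE _ h2').2 ζ ζ' h (lt_of_le_of_ne h1' hc') (by rw [← hf, hg])
        rw [hf, hg]
        gcongr

/-- Proposition (Milner–Rado application): for every infinite cardinal `κ` there is a
coloring `c : [κ⁺]² → κ⁺` such that every set `t_{ξβ} = {ζ < β : c(ζ,β) = c(ξ,β)}`
has order type `< κ^ω` (ordinal exponentiation), yet there is no `c`-rainbow subset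
of `κ⁺` of order type `ω₁ + 1`.  That is, `κ⁺ ↛* (ω₁+1)²_{<κ^ω-type-bounded}`. -/
theorem statement4 (κ : Cardinal.{0}) (hκ : ℵ₀ ≤ κ) :
    ∃ c : Ordinal.{0} → Ordinal.{0} → Ordinal.{0},
      -- `c` maps `[κ⁺]²` into `κ⁺`
      (∀ a b : Ordinal.{0}, a < b → b < (Order.succ κ).ord → c a b < (Order.succ κ).ord) ∧
      -- (i) `c` is `<κ^ω`-type-bounded
      (∀ ξ β : Ordinal.{0}, ξ < β → β < (Order.succ κ).ord →
        otp {ζ | ζ < β ∧ c ζ β = c ξ β} <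
          Ordinal.lift.{1,0} (κ.ord ^ (Ordinal.omega0 : Ordinal.{0}))) ∧
      -- (ii) there is no `c`-rainbow subset of `κ⁺` of order type `ω₁ + 1`
      ¬ ∃ A : Set Ordinal.{0}, A ⊆ Set.Iio (Order.succ κ).ord ∧ Rainbow c A ∧
        otp A = Ordinal.lift.{1,0} ((Cardinal.aleph 1).ord + 1 : Ordinal.{0}) := by
  choose! f e hfe using milner_rado κ
  have hκ1 : 1 < κ.ord := by
    rw [Cardinal.lt_ord]; simpa using Cardinal.one_lt_aleph0.trans_le hκ
  have hω : (Ordinal.omega0 : Ordinal.{0}) ≤ (Order.succ κ).ord := by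
    rw [← Cardinal.ord_aleph0]
    exact Cardinal.ord_le_ord.2 (hκ.trans (Order.le_succ κ))
  refine ⟨fun ζ β => (f β ζ : Ordinal.{0}), fun a b _ _ => (Ordinal.natCast_lt_omega0 _).trans_le hω,
    fun ξ β _ hβ => ?_, ?_⟩
  · obtain ⟨h1, h2⟩ := hfe β hβ
    have hle : otp {ζ | ζ < β ∧ (f β ζ : Ordinal.{0}) = f β ξ} ≤
        Ordinal.lift.{1,0} (κ.ord ^ (f β ξ + 1)) := by
      rw [← Ordinal.type_lt_Iio, otp, Ordinal.type_le_iff']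
      refine ⟨RelEmbedding.ofMonotone (fun ζ => ⟨e β ζ.1, ?_⟩) ?_⟩
      · have := h1 ζ.1 ζ.2.1
        rwa [Nat.cast_injective ζ.2.2] at this
      · intro a b hab
        exact h2 _ _ hab b.2.1 (Nat.cast_injective (a.2.2.trans b.2.2.symm))
    refine hle.trans_lt (Ordinal.lift_lt.2 ?_)
    rw [← Ordinal.opow_natCast]
    exact (Ordinal.opow_lt_opow_iff_right hκ1).2 (Ordinal.natCast_lt_omega0 _)
  · rintro ⟨A, -, hA, ht⟩
    rw [← Ordinal.type_lt_Iio, otp, Ordinal.type_eq] at ht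
    obtain ⟨φ⟩ := ht
    set o : Ordinal.{0} := (Cardinal.aleph 1).ord
    have hlt : ∀ x : Set.Iio o, x.1 < o + 1 := fun x => x.2.trans (lt_add_one o)
    let b : A := φ.symm ⟨o, lt_add_one o⟩
    let g : Set.Iio o → A := fun x => φ.symm ⟨x.1, hlt x⟩
    have hg : ∀ x, (g x).1 < b.1 := fun x => φ.symm.map_rel_iff.2 x.2
    have hinj : Function.Injective fun x : Set.Iio o => f b.1 (g x).1 := by
      intro x y hxy
      have h := (hA _ _ _ _ (g x).2 b.2 (g y).2 b.2 (hg x) (hg y)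
        (congrArg (Nat.cast : ℕ → Ordinal.{0}) hxy)).1
      simpa [Subtype.ext_iff] using φ.symm.injective (Subtype.ext h)
    have hcount : #(Set.Iio o) ≤ ℵ₀ := Cardinal.mk_le_aleph0_iff.2 hinj.countable
    rw [Cardinal.mk_Iio_ordinal, Cardinal.card_ord] at hcount
    have := Cardinal.aleph0_lt_aleph_one.trans_le (Cardinal.lift_le_aleph0.1 hcount)
    exact this.false
end

section
/- Let κ be an infinite cardinal and suppose that for every α < κ⁺ there is a sequence ⟨A^α_n : n ∈ ω⟩ of pairwise disjoint subsets of α with ⋃_{n∈ω} A^α_n = α and otp(A^α_n) ≤ κ^n (ordinal exponentiation) for each n. Then there exists a normal coloring c : [κ⁺]² → κ⁺ such that for all α < κ⁺ and all β₀, β₁ < α, c({β₀, α}) = c({β₁, α}) if and only if there is n ∈ ω with β₀, β₁ ∈ A^α_n. Moreover, any such coloring c satisfies: for all ξ < β < κ⁺ the set t_{ξβ} := {ζ < β : c({ζ, β}) = c({ξ, β})} equals A^β_n for some n ∈ ω (hence has order type < κ^ω), and there is no c-rainbow subset of κ⁺ of order type ω₁ + 1. -/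
/-!
Write `p a α` for the index `n` of the piece `A α n` containing `a < α`. The coloring
`c a α = ω * α + p a α` works: Euclidean division by `ω` recovers both `α` (normality) and the
index, and `ω * α + n` still has cardinality at most `κ`, so it lies below `κ⁺`.

For any such coloring, `t_{ξβ}` is the piece of `β` containing `ξ`, of order type at most
`κ ^ n < κ ^ ω`. A rainbow set `B` of order type `ω₁ + 1` would have an element `b` with `ℵ₁`
predecessors in `B`; by rainbowness these lie in distinct pieces of `b`, of which there are only
countably many (`Rainbow.countable_below`).
-/

open Cardinal Ordinal Set

/-- `c` is a normal coloring on `[λ']²`. -/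
def NormalOn (c : Ordinal.{0} → Ordinal.{0} → Ordinal.{0}) (lam : Ordinal.{0}) : Prop :=
  ∀ a b a' b' : Ordinal.{0}, a < b → b < lam → a' < b' → b' < lam →
    c a b = c a' b' → b = b'

theorem omega0_mul_add_nat_inj {a b : Ordinal.{0}} {m n : ℕ}
    (h : ω * a + (m : Ordinal.{0}) = ω * b + (n : Ordinal.{0})) : a = b ∧ m = n := by
  have key : ∀ (x : Ordinal.{0}) (k : ℕ), (ω * x + (k : Ordinal.{0})) / ω = x := fun x k => by
    rw [Ordinal.mul_add_div _ Ordinal.omega0_ne_zero,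
      Ordinal.div_eq_zero_of_lt (Ordinal.natCast_lt_omega0 k), add_zero]
  have hab : a = b := by rw [← key a m, h, key b n]
  subst hab
  exact ⟨rfl, by simpa using h⟩

theorem omega0_mul_add_nat_lt_succ {κ : Cardinal.{0}} (hκ : ℵ₀ ≤ κ) {a : Ordinal.{0}}
    (ha : a < (Order.succ κ).ord) (n : ℕ) :
    ω * a + (n : Ordinal.{0}) < (Order.succ κ).ord := by
  rw [Cardinal.lt_ord, Order.lt_succ_iff] at ha ⊢
  rw [Ordinal.card_add, Ordinal.card_mul, Ordinal.card_omega0, Ordinal.card_nat]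
  exact Cardinal.add_le_of_le hκ (Cardinal.mul_le_of_le hκ hκ ha)
    ((Cardinal.natCast_le_aleph0).trans hκ)

/-- If the colors `c · b` are determined by countably many indices, then an element `b` of a
rainbow set has only countably many predecessors in it. -/
theorem Rainbow.countable_below {c : Ordinal.{0} → Ordinal.{0} → Ordinal.{0}}
    {B : Set Ordinal.{0}} (hB : Rainbow c B) {b : Ordinal.{0}} (hb : b ∈ B)
    (p : Ordinal.{0} → ℕ)
    (hp : ∀ x < b, ∀ y < b, p x = p y → c x b = c y b) :
    Countable {x : B // x.1 < b} := by
  refine Function.Injective.countable (f := fun x : {x : B // x.1 < b} => p x.1.1) ?_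
  intro x y hxy
  have h := hp _ x.2 _ y.2 hxy
  exact Subtype.ext (Subtype.ext (hB _ _ _ _ x.1.2 hb y.1.2 hb x.2 y.2 h).1)

/-- A set of order type `ω₁ + 1` has an element with uncountably many predecessors in the set. -/
theorem exists_uncountable_below {B : Set Ordinal.{0}}
    (h : otp B = Ordinal.lift.{1,0} ((Cardinal.aleph 1).ord + 1 : Ordinal.{0})) :
    ∃ b ∈ B, ¬ Countable {x : B // x.1 < b} := by
  have hlt : Ordinal.lift.{1,0} (Cardinal.aleph 1).ord <
      Ordinal.type ((· < ·) : B → B → Prop) := by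
    change _ < otp B
    rw [h, Ordinal.lift_lt]
    exact lt_add_one _
  obtain ⟨b, hb⟩ := Ordinal.typein_surj _ hlt
  refine ⟨b.1, b.2, fun hc => ?_⟩
  have hcard := congrArg Ordinal.card hb
  rw [Ordinal.card_typein, ← Ordinal.lift_card, Cardinal.card_ord] at hcard
  have hle : #{x : B // x < b} ≤ ℵ₀ := Cardinal.mk_le_aleph0_iff.2 hc
  rw [hcard, Cardinal.lift_le_aleph0] at hle
  exact absurd hle (not_le.2 Cardinal.aleph0_lt_aleph_one)

/-- Milner–Rado-style construction: given, for each `α < κ⁺`, a partition of `α` into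
pieces `A α n` (`n ∈ ω`) with `otp (A α n) ≤ κ^n`, there is a normal coloring
`c : [κ⁺]² → κ⁺` with `c(β₀,α) = c(β₁,α)` iff `β₀, β₁` lie in a common piece `A α n`;
moreover, for any such coloring each set `t_{ξβ}` equals some `A β n` (hence has
order type `< κ^ω`) and there is no `c`-rainbow subset of order type `ω₁ + 1`. -/
theorem statement5 (κ : Cardinal.{0}) (hκ : ℵ₀ ≤ κ)
    (A : Ordinal.{0} → ℕ → Set Ordinal.{0})
    (hdisj : ∀ α < (Order.succ κ).ord, ∀ n m : ℕ, n ≠ m → A α n ∩ A α m = ∅)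
    (hcover : ∀ α < (Order.succ κ).ord, (⋃ n : ℕ, A α n) = Set.Iio α)
    (hotp : ∀ α < (Order.succ κ).ord, ∀ n : ℕ,
      otp (A α n) ≤ Ordinal.lift.{1,0} (κ.ord ^ (n : Ordinal.{0}))) :
    -- there exists a normal coloring `c : [κ⁺]² → κ⁺` with the stated property
    (∃ c : Ordinal.{0} → Ordinal.{0} → Ordinal.{0},
      (∀ a b : Ordinal.{0}, a < b → b < (Order.succ κ).ord → c a b < (Order.succ κ).ord) ∧
      NormalOn c (Order.succ κ).ord ∧
      (∀ α < (Order.succ κ).ord, ∀ β₀ < α, ∀ β₁ < α,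
        (c β₀ α = c β₁ α ↔ ∃ n : ℕ, β₀ ∈ A α n ∧ β₁ ∈ A α n))) ∧
    -- moreover, any such coloring satisfies the two further conclusions
    (∀ c : Ordinal.{0} → Ordinal.{0} → Ordinal.{0},
      (∀ a b : Ordinal.{0}, a < b → b < (Order.succ κ).ord → c a b < (Order.succ κ).ord) →
      NormalOn c (Order.succ κ).ord →
      (∀ α < (Order.succ κ).ord, ∀ β₀ < α, ∀ β₁ < α,
        (c β₀ α = c β₁ α ↔ ∃ n : ℕ, β₀ ∈ A α n ∧ β₁ ∈ A α n)) →
      (∀ ξ β : Ordinal.{0}, ξ < β → β < (Order.succ κ).ord →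
        ∃ n : ℕ, {ζ | ζ < β ∧ c ζ β = c ξ β} = A β n ∧
          otp {ζ | ζ < β ∧ c ζ β = c ξ β} <
            Ordinal.lift.{1,0} (κ.ord ^ (Ordinal.omega0 : Ordinal.{0}))) ∧
      ¬ ∃ B : Set Ordinal.{0}, B ⊆ Set.Iio (Order.succ κ).ord ∧ Rainbow c B ∧
        otp B = Ordinal.lift.{1,0} ((Cardinal.aleph 1).ord + 1 : Ordinal.{0})) := by
  have hp : ∀ α < (Order.succ κ).ord, ∀ a < α, ∃ n, a ∈ A α n := fun α hα a ha => by
    have : a ∈ ⋃ n, A α n := by rw [hcover α hα]; exact ha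
    exact Set.mem_iUnion.1 this
  choose! p hp using hp
  have huniq : ∀ α < (Order.succ κ).ord, ∀ a, ∀ n m : ℕ, a ∈ A α n → a ∈ A α m → n = m := by
    intro α hα a n m hn hm
    by_contra hne
    have : a ∈ A α n ∩ A α m := ⟨hn, hm⟩
    rw [hdisj α hα n m hne] at this
    exact this
  refine ⟨⟨fun a α => ω * α + (p α a : Ordinal.{0}), ?_, ?_, ?_⟩, ?_⟩
  · intro a b _ hb
    exact omega0_mul_add_nat_lt_succ hκ hb _
  · intro a b a' b' _ _ _ _ h
    exact (omega0_mul_add_nat_inj h).1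
  · intro α hα x hx y hy
    constructor
    · intro h
      have hxy := (omega0_mul_add_nat_inj h).2
      exact ⟨p α x, hp α hα x hx, hxy ▸ hp α hα y hy⟩
    · rintro ⟨n, hn, hm⟩
      have h1 := huniq α hα x _ _ (hp α hα x hx) hn
      have h2 := huniq α hα y _ _ (hp α hα y hy) hm
      simp only [h1, h2]
  · intro c _ _ hc
    constructor
    · intro ξ β hξ hβ
      have heq : {ζ | ζ < β ∧ c ζ β = c ξ β} = A β (p β ξ) := by
        ext ζ
        constructor
        · rintro ⟨hζ, h⟩
          obtain ⟨n, hn, hm⟩ := (hc β hβ ζ hζ ξ hξ).1 h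
          rwa [huniq β hβ ξ _ _ (hp β hβ ξ hξ) hm]
        · intro h
          have hζ : ζ < β := by
            have : ζ ∈ ⋃ n, A β n := Set.mem_iUnion.2 ⟨_, h⟩
            rwa [hcover β hβ] at this
          exact ⟨hζ, (hc β hβ ζ hζ ξ hξ).2 ⟨_, h, hp β hβ ξ hξ⟩⟩
      refine ⟨p β ξ, heq, ?_⟩
      rw [heq]
      refine (hotp β hβ _).trans_lt (Ordinal.lift_lt.2 ?_)
      have h1 : (1 : Ordinal.{0}) < κ.ord :=
        Ordinal.one_lt_omega0.trans_le (Cardinal.omega0_le_ord.2 hκ)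
      exact (Ordinal.opow_lt_opow_iff_right h1).2 (Ordinal.natCast_lt_omega0 _)
    · rintro ⟨B, hBsub, hB, hotpB⟩
      obtain ⟨b, hbB, hunc⟩ := exists_uncountable_below hotpB
      have hb := hBsub hbB
      refine hunc (hB.countable_below hbB (p b) fun x hx y hy hxy => ?_)
      exact (hc b hb x hx y hy).2 ⟨p b x, hp b hb x hx, hxy ▸ hp b hb y hy⟩
end
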